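/- Existence and bound of the gradient (Theorem 3.2, second part): for every p > 2, integer n ≥ 2, r > 0 and M ≥ 0 there exists a constant C > 0 (depending only on p, n, r and M) such that the following holds. Let ε ∈ (0,1) with ε < r, and let u be a bounded Borel function on Ω_ε with sup_{Ω_ε}|u| ≤ M satisfying the DPP at every point of Ω. Then for every z₀ with B_{5r}(z₀) ⊂ Ω, the function u is differentiable at Lebesgue-almost every point of B_r(z₀), and its (Fréchet) gradient satisfies |Du(z)| ≤ C for almost every z ∈ B_r(z₀). -/

import Mathlib

open MeasureTheory Metric Set

section Oscillation

variable {E : Type*} {v : E → ℝ} {M : ℝ}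

theorem bddAbove_image_of_abs_le (hv : ∀ x, |v x| ≤ M) (s : Set E) : BddAbove (v '' s) :=
  ⟨M, by rintro _ ⟨a, -, rfl⟩; exact (abs_le.1 (hv a)).2⟩

theorem bddBelow_image_of_abs_le (hv : ∀ x, |v x| ≤ M) (s : Set E) : BddBelow (v '' s) :=
  ⟨-M, by rintro _ ⟨a, -, rfl⟩; exact (abs_le.1 (hv a)).1⟩

theorem sInf_image_eq_neg_sSup_image_neg (v : E → ℝ) (s : Set E) :
    sInf (v '' s) = -sSup ((fun x => -v x) '' s) := by
  rw [Real.sInf_def, ← image_neg_eq_neg, image_image]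

theorem intervalIntegrable_of_monotoneOn_of_abs_le {f : ℝ → ℝ} {a b : ℝ} (hab : a ≤ b)
    (hf : MonotoneOn f (Ioc a b)) (hM : ∀ t ∈ Ioc a b, |f t| ≤ M) :
    IntervalIntegrable f volume a b := by
  rw [intervalIntegrable_iff_integrableOn_Ioc_of_le hab]
  refine Integrable.of_bound
    (aemeasurable_restrict_of_monotoneOn measurableSet_Ioc hf).aestronglyMeasurable M ?_
  filter_upwards [ae_restrict_mem measurableSet_Ioc] with t ht using by
    simpa using hM t ht

variable [NormedAddCommGroup E]

theorem abs_sSup_image_ball_le (hv : ∀ x, |v x| ≤ M) (x : E) {t : ℝ} (ht : 0 < t) :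
    |sSup (v '' ball x t)| ≤ M := by
  have hx : v x ∈ v '' ball x t := mem_image_of_mem v (mem_ball_self ht)
  refine abs_le.2 ⟨(abs_le.1 (hv x)).1.trans
    (le_csSup (bddAbove_image_of_abs_le hv _) hx), csSup_le ⟨_, hx⟩ ?_⟩
  rintro _ ⟨a, -, rfl⟩
  exact (abs_le.1 (hv a)).2

theorem intervalIntegrable_sSup_image_ball (hv : ∀ x, |v x| ≤ M) (x : E) {a b : ℝ}
    (ha : 0 ≤ a) (hab : a ≤ b) :
    IntervalIntegrable (fun t => sSup (v '' ball x t)) volume a b := by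
  refine intervalIntegrable_of_monotoneOn_of_abs_le (M := M) hab (fun s hs t _ hst => ?_)
    (fun t ht => abs_sSup_image_ball_le hv x (ha.trans_lt ht.1))
  exact csSup_le_csSup (bddAbove_image_of_abs_le hv _)
    ((nonempty_ball.2 (ha.trans_lt hs.1)).image v) (image_mono (ball_subset_ball hst))

theorem intervalIntegrable_sInf_image_ball (hv : ∀ x, |v x| ≤ M) (x : E) {a b : ℝ}
    (ha : 0 ≤ a) (hab : a ≤ b) :
    IntervalIntegrable (fun t => sInf (v '' ball x t)) volume a b := by
  simp_rw [sInf_image_eq_neg_sSup_image_neg v]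
  exact (intervalIntegrable_sSup_image_ball (v := fun x => -v x) (M := M)
    (by simpa using hv) x ha hab).neg

/-- If `f` is dominated by the shift of `g` by `d` and both take values in `[Q, P]`, then the
integrals over `[0, ε]` differ by at most `d * (P - Q)`. -/
theorem integral_le_integral_add_of_le_shift {f g : ℝ → ℝ} {d ε P Q : ℝ} (hd : 0 ≤ d) (hdε : d ≤ ε)
    (hf : ∀ a b, 0 ≤ a → a ≤ b → IntervalIntegrable f volume a b)
    (hg : ∀ a b, 0 ≤ a → a ≤ b → IntervalIntegrable g volume a b)
    (hfP : ∀ t ∈ Ioo 0 ε, f t ≤ P) (hgQ : ∀ t ∈ Ioo 0 ε, Q ≤ g t)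
    (hfg : ∀ t, 0 < t → f t ≤ g (t + d)) :
    ∫ t in 0..ε, f t ≤ (∫ t in 0..ε, g t) + d * (P - Q) := by
  have h1 : ∫ t in 0..(ε - d), f t ≤ ∫ t in d..ε, g t := by
    have : ∫ t in 0..(ε - d), g (t + d) = ∫ t in d..ε, g t := by
      rw [intervalIntegral.integral_comp_add_right]; simp
    rw [← this]
    refine intervalIntegral.integral_mono_on_of_le_Ioo (by linarith) (hf _ _ le_rfl (by linarith))
      ?_ fun t ht => hfg t ht.1
    simpa using (hg d ε hd hdε).comp_add_right d
  have h2 : ∫ t in (ε - d)..ε, f t ≤ d * P := by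
    calc ∫ t in (ε - d)..ε, f t ≤ ∫ t in (ε - d)..ε, P :=
          intervalIntegral.integral_mono_on_of_le_Ioo (by linarith)
            (hf _ _ (by linarith) (by linarith)) (by simp)
            fun t ht => hfP t ⟨by linarith [ht.1], ht.2⟩
      _ = d * P := by simp
  have h3 : d * Q ≤ ∫ t in 0..d, g t := by
    calc d * Q = ∫ t in 0..d, Q := by simp
      _ ≤ ∫ t in 0..d, g t :=
          intervalIntegral.integral_mono_on_of_le_Ioo hd (by simp) (hg _ _ le_rfl hd)
            fun t ht => hgQ t ⟨ht.1, ht.2.trans_le hdε⟩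
  rw [← intervalIntegral.integral_add_adjacent_intervals (hf 0 (ε - d) le_rfl (by linarith))
    (hf (ε - d) ε (by linarith) (by linarith)),
    ← intervalIntegral.integral_add_adjacent_intervals (hg 0 d le_rfl hd) (hg d ε hd hdε)]
  linarith

theorem sSup_image_ball_sub_sInf_image_ball_le {x x' y : E} {s t G : ℝ} (ht : 0 < t)
    (hx : x ∈ ball y s) (hx' : x' ∈ ball y s)
    (hG : ∀ a ∈ ball y (s + t), ∀ a' ∈ ball y (s + t), v a - v a' ≤ G) :
    sSup (v '' ball x t) - sInf (v '' ball x' t) ≤ G := by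
  have hsub : ∀ w ∈ ball y s, ball w t ⊆ ball y (s + t) := fun w hw =>
    ball_subset_ball' (by rw [add_comm]; gcongr; exact (mem_ball.1 hw).le)
  have hne : ∀ w : E, (v '' ball w t).Nonempty := fun w => (nonempty_ball.2 ht).image v
  suffices sSup (v '' ball x t) - G ≤ sInf (v '' ball x' t) by linarith
  refine le_csInf (hne x') ?_
  rintro _ ⟨a', ha', rfl⟩
  suffices sSup (v '' ball x t) ≤ v a' + G by linarith
  refine csSup_le (hne x) ?_
  rintro _ ⟨a, ha, rfl⟩
  linarith [hG a (hsub x hx ha) a' (hsub x' hx' ha')]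

theorem sInf_image_ball_sub_sSup_image_ball_le [NormedSpace ℝ E] (hv : ∀ x, |v x| ≤ M)
    {x x' y : E} {s t G : ℝ} (ht : 0 < t) (hx : x ∈ ball y s) (hx' : x' ∈ ball y s) (hG₀ : 0 ≤ G)
    (hG : ∀ a ∈ ball y (s - t), ∀ a' ∈ ball y (s - t), v a - v a' ≤ G) :
    sInf (v '' ball x t) - sSup (v '' ball x' t) ≤ G := by
  have key : ∀ w ∈ ball x t, ∀ w' ∈ ball x' t, v w - v w' ≤ G →
      sInf (v '' ball x t) - sSup (v '' ball x' t) ≤ G := fun w hw w' hw' h => by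
    linarith [csInf_le (bddBelow_image_of_abs_le hv _) (mem_image_of_mem v hw),
      le_csSup (bddAbove_image_of_abs_le hv _) (mem_image_of_mem v hw')]
  rcases le_or_gt s t with hst | hst
  · exact key y (mem_ball'.2 ((mem_ball.1 hx).trans_le hst)) y
      (mem_ball'.2 ((mem_ball.1 hx').trans_le hst)) (by simpa using hG₀)
  · have hs : 0 < s := ht.trans hst
    have hmove : ∀ w ∈ ball y s, ∃ w' ∈ ball w t, w' ∈ ball y (s - t) := fun w hw => by
      rw [mem_ball, dist_eq_norm] at hw
      refine ⟨w - (t / s) • (w - y), ?_, ?_⟩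
      · rw [mem_ball, dist_eq_norm, sub_sub_cancel_left, norm_neg, norm_smul, Real.norm_eq_abs,
          abs_of_pos (by positivity)]
        calc t / s * ‖w - y‖ < t / s * s := by gcongr
          _ = t := by field_simp
      · have h1 : w - (t / s) • (w - y) - y = (1 - t / s) • (w - y) := by module
        have h2 : 0 < 1 - t / s := by rw [sub_pos, div_lt_one hs]; exact hst
        rw [mem_ball, dist_eq_norm, h1, norm_smul, Real.norm_eq_abs, abs_of_pos h2]
        calc (1 - t / s) * ‖w - y‖ < (1 - t / s) * s := by gcongr
          _ = s - t := by field_simp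
    obtain ⟨w, hw, hwy⟩ := hmove x hx
    obtain ⟨w', hw', hwy'⟩ := hmove x' hx'
    exact key w hw w' hw' (hG w hwy w' hwy')

/-- The barrier for the oscillation of `v` over `ball (z + Z) s`: concave in `s`, quadratic in
`Z`. -/
def oscBarrier (c A r ε s : ℝ) (Z : E) : ℝ :=
  c * (A * (6 * r * (s + ε) - (s + ε) ^ 2) + ‖Z‖ ^ 2)

theorem oscBarrier_nonneg {c A r ε s : ℝ} {Z : E} (hc : 0 ≤ c) (hA : 0 ≤ A)
    (hs : 0 ≤ s + ε) (hsr : s + ε ≤ 3 * r) : 0 ≤ oscBarrier c A r ε s Z := by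
  have : 0 ≤ 6 * r * (s + ε) - (s + ε) ^ 2 := by nlinarith
  unfold oscBarrier
  positivity

theorem le_oscBarrier {c A r ε s : ℝ} {Z : E} (hc : 0 ≤ c) (hA : 1 ≤ A) (hr : 0 < r)
    (hs : 0 ≤ s + ε) (hsr : s + ε ≤ 3 * r) (h : r ≤ s + ε ∨ r ≤ ‖Z‖) :
    c * r ^ 2 ≤ oscBarrier c A r ε s Z := by
  have h0 : 0 ≤ 6 * r * (s + ε) - (s + ε) ^ 2 := by nlinarith
  refine mul_le_mul_of_nonneg_left ?_ hc
  rcases h with h | h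
  · have : r ^ 2 ≤ 6 * r * (s + ε) - (s + ε) ^ 2 := by nlinarith
    nlinarith [sq_nonneg ‖Z‖]
  · have : r ^ 2 ≤ ‖Z‖ ^ 2 := by gcongr
    nlinarith

end Oscillation

/-- The dynamic programming principle for `v` at the point `x`. -/
def SatisfiesDPPAt {E : Type*} [NormedAddCommGroup E] [MeasurableSpace E] (μ : Measure E)
    (α β ε : ℝ) (v : E → ℝ) (x : E) : Prop :=
  v x = α / (2 * ε) * (∫ t in (0 : ℝ)..ε, (sSup (v '' ball x t) + sInf (v '' ball x t)))
    + β * ⨍ z in ball x ε, v z ∂μ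

section Translation

variable {E : Type*} [NormedAddCommGroup E] [MeasurableSpace E] [BorelSpace E] {μ : Measure E}
  [μ.IsAddHaarMeasure]

theorem setIntegral_ball_eq_setIntegral_ball_zero (v : E → ℝ) (x : E) (t : ℝ) :
    ∫ z in ball x t, v z ∂μ = ∫ h in ball 0 t, v (x + h) ∂μ := by
  have := (measurePreserving_add_left μ x).setIntegral_preimage_emb
    (measurableEmbedding_addLeft x) v (ball x t)
  rw [← this]
  simp

theorem setAverage_ball_eq (v : E → ℝ) (x : E) (t : ℝ) :
    ⨍ z in ball x t, v z ∂μ = (μ.real (ball 0 t))⁻¹ * ∫ z in ball x t, v z ∂μ := by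
  rw [setAverage_eq, smul_eq_mul, Measure.real, Measure.real, Measure.addHaar_ball_center]

end Translation

section DPP

variable {E : Type*} [NormedAddCommGroup E] [InnerProductSpace ℝ E] [FiniteDimensional ℝ E]
  [MeasurableSpace E] {μ : Measure E} [μ.IsAddHaarMeasure] {v : E → ℝ} {M α β ε : ℝ}

theorem integrableOn_ball_of_abs_le (hvm : Measurable v) (hv : ∀ x, |v x| ≤ M) (x : E) (t : ℝ) :
    IntegrableOn v (ball x t) μ :=
  Measure.integrableOn_of_bounded (M := M) measure_ball_lt_top.ne hvm.aestronglyMeasurable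
    (by filter_upwards with a using by simpa using hv a)

theorem real_ball_zero_pos (hε : 0 < ε) : 0 < μ.real (ball (0 : E) ε) :=
  ENNReal.toReal_pos (measure_ball_pos μ 0 hε).ne' measure_ball_lt_top.ne

variable [BorelSpace E]

theorem setIntegral_ball_zero_clm (ℓ : E →L[ℝ] ℝ) (t : ℝ) : ∫ h in ball 0 t, ℓ h ∂μ = 0 := by
  have := (Measure.measurePreserving_neg μ).setIntegral_preimage_emb
    (MeasurableEquiv.neg E).measurableEmbedding ℓ (ball 0 t)
  simp only [neg_preimage, map_neg, integral_neg, neg_ball, neg_zero] at this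
  linarith

/-- Coupling the noise at `x` and `x'` by translation, a linear term averages out. -/
theorem setAverage_ball_sub_le (hε : 0 < ε) (hvm : Measurable v) (hv : ∀ x, |v x| ≤ M) {x x' : E}
    {k : ℝ} (ℓ : E →L[ℝ] ℝ) (hk : ∀ h ∈ ball (0 : E) ε, v (x + h) - v (x' + h) ≤ k + ℓ h) :
    (⨍ z in ball x ε, v z ∂μ) - ⨍ z in ball x' ε, v z ∂μ ≤ k := by
  have hint : ∀ y : E, IntegrableOn (fun h => v (y + h)) (ball 0 ε) μ := fun y =>
    integrableOn_ball_of_abs_le (hvm.comp (measurable_const_add y)) (fun h => hv _) 0 ε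
  have hℓ : IntegrableOn ℓ (ball 0 ε) μ :=
    (ℓ.continuous.locallyIntegrable.integrableOn_isCompact
      (isCompact_closedBall (0 : E) ε)).mono_set ball_subset_closedBall
  have hm := real_ball_zero_pos (μ := μ) hε
  rw [setAverage_ball_eq, setAverage_ball_eq, ← mul_sub, inv_mul_le_iff₀ hm,
    setIntegral_ball_eq_setIntegral_ball_zero v x, setIntegral_ball_eq_setIntegral_ball_zero v x',
    ← integral_sub (hint x) (hint x')]
  calc ∫ h in ball 0 ε, (v (x + h) - v (x' + h)) ∂μ ≤ ∫ h in ball 0 ε, (k + ℓ h) ∂μ :=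
        setIntegral_mono_on ((hint x).sub (hint x'))
          ((integrableOn_const measure_ball_lt_top.ne).add hℓ) measurableSet_ball hk
    _ = μ.real (ball 0 ε) * k := by
        have hk : Integrable (fun _ : E => k) (μ.restrict (ball 0 ε)) :=
          integrableOn_const measure_ball_lt_top.ne
        rw [integral_add hk hℓ, setIntegral_ball_zero_clm]
        simp

/-- One step of the comparison argument: bounds for the two kinds of moves combine. -/
theorem SatisfiesDPPAt.sub_le (hε : 0 < ε) (hα : 0 ≤ α) (hβ : 0 ≤ β)
    (hvm : Measurable v) (hv : ∀ x, |v x| ≤ M) {x x' : E}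
    (hx : SatisfiesDPPAt μ α β ε v x) (hx' : SatisfiesDPPAt μ α β ε v x') {κ c k : ℝ}
    (ℓ : E →L[ℝ] ℝ) (hk : ∀ h ∈ ball (0 : E) ε, v (x + h) - v (x' + h) ≤ k + ℓ h)
    (ht : ∀ t ∈ Ioo 0 ε, (sSup (v '' ball x t) - sInf (v '' ball x' t))
      + (sInf (v '' ball x t) - sSup (v '' ball x' t)) ≤ 2 * κ - 2 * c * t ^ 2) :
    v x - v x' ≤ α * (κ - c * ε ^ 2 / 3) + β * k := by
  have hI : ∀ y : E, IntervalIntegrable (fun t => sSup (v '' ball y t) + sInf (v '' ball y t))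
      volume 0 ε := fun y => (intervalIntegrable_sSup_image_ball hv y le_rfl hε.le).add
    (intervalIntegrable_sInf_image_ball hv y le_rfl hε.le)
  have h1 : (∫ t in (0 : ℝ)..ε, (sSup (v '' ball x t) + sInf (v '' ball x t)))
      - (∫ t in (0 : ℝ)..ε, (sSup (v '' ball x' t) + sInf (v '' ball x' t)))
      ≤ 2 * ε * (κ - c * ε ^ 2 / 3) := by
    rw [← intervalIntegral.integral_sub (hI x) (hI x')]
    calc _ ≤ ∫ t in (0 : ℝ)..ε, (2 * κ - 2 * c * t ^ 2) := by
          refine intervalIntegral.integral_mono_on_of_le_Ioo hε.le ((hI x).sub (hI x'))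
            (Continuous.intervalIntegrable (by fun_prop) _ _) fun t h => ?_
          linarith [ht t h]
      _ = 2 * ε * (κ - c * ε ^ 2 / 3) := by
          rw [intervalIntegral.integral_sub (by simp)
            (Continuous.intervalIntegrable (by fun_prop) _ _)]
          simp
          ring
  have h2 := mul_le_mul_of_nonneg_left h1 (by positivity : 0 ≤ α / (2 * ε))
  have h3 := mul_le_mul_of_nonneg_left
    (setAverage_ball_sub_le (μ := μ) hε hvm hv ℓ hk) hβ
  have h4 : α / (2 * ε) * (2 * ε * (κ - c * ε ^ 2 / 3)) = α * (κ - c * ε ^ 2 / 3) := by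
    field_simp
  rw [hx, hx']
  linarith

/-- The improvement step: an oscillation bound by the barrier plus `θ` improves by a fixed
amount, as long as the error stays nonnegative. -/
theorem sub_le_oscBarrier_add_of_sub_le {c A r θ : ℝ} {z : E} (hε : 0 < ε) (hεr : ε < r)
    (hα : 0 < α) (hβ : 0 ≤ β) (hαβ : α + β = 1) (hA : A = 3 * β / α + 1) (hc : 0 ≤ c)
    (hcM : 2 * M ≤ c * r ^ 2) (hvm : Measurable v) (hv : ∀ x, |v x| ≤ M)
    (hdpp : ∀ x ∈ ball z (2 * r), SatisfiesDPPAt μ α β ε v x) (hθ : 0 ≤ θ)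
    (hosc : ∀ s y, 0 < s → s < 2 * r → ‖y - z‖ < 2 * r → ∀ x ∈ ball y s, ∀ x' ∈ ball y s,
      v x - v x' ≤ oscBarrier c A r ε s (y - z) + θ)
    {s : ℝ} {y x x' : E} (hs : 0 < s) (hs2 : s < 2 * r) (hy : ‖y - z‖ < 2 * r)
    (hx : x ∈ ball y s) (hx' : x' ∈ ball y s) :
    v x - v x' ≤ oscBarrier c A r ε s (y - z) + max (θ - c * ε ^ 2 * α / 3) 0 := by
  have hr : 0 < r := hε.trans hεr
  have hA1 : 1 ≤ A := by
    have : 0 ≤ 3 * β / α := by positivity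
    linarith
  by_cases hfar : r ≤ s ∨ r ≤ ‖y - z‖
  · have h1 := le_oscBarrier (ε := ε) (Z := y - z) hc hA1 hr (s := s) (by linarith) (by linarith)
      (hfar.imp (fun h => by linarith) id)
    have h2 := abs_le.1 (hv x)
    have h3 := abs_le.1 (hv x')
    linarith [le_max_right (θ - c * ε ^ 2 * α / 3) 0]
  push Not at hfar
  have hxz : ∀ w ∈ ball y s, w ∈ ball z (2 * r) := fun w hw => by
    rw [mem_ball] at hw ⊢
    have := dist_triangle w y z
    rw [dist_eq_norm y z] at this
    linarith
  set F := oscBarrier c A r ε s (y - z) with hF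
  have hstep := SatisfiesDPPAt.sub_le hε hα.le hβ hvm hv (hdpp x (hxz x hx))
    (hdpp x' (hxz x' hx')) (κ := F + θ) (c := c * A) (k := F + c * ε ^ 2 + θ)
    ((2 * c) • innerSL ℝ (y - z)) ?_ ?_
  · have : α * (F + θ - c * A * ε ^ 2 / 3) + β * (F + c * ε ^ 2 + θ)
        = F + (θ - c * ε ^ 2 * α / 3) := by
      have hβ' : β = 1 - α := by linarith
      rw [hA, hβ']
      field_simp
      ring
    rw [this] at hstep
    linarith [le_max_left (θ - c * ε ^ 2 * α / 3) 0]
  · intro h hh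
    rw [mem_ball_zero_iff] at hh
    have hyh : y + h - z = (y - z) + h := by abel
    have h1 := hosc s (y + h) hs hs2
      (by rw [hyh]; linarith [norm_add_le (y - z) h]) (x + h) (by simpa using hx)
      (x' + h) (by simpa using hx')
    refine h1.trans ?_
    have h2 : ‖h‖ ^ 2 ≤ ε ^ 2 := by gcongr
    have h3 := mul_le_mul_of_nonneg_left h2 hc
    simp only [hF, oscBarrier, hyh, norm_add_sq_real, smul_apply, innerSL_apply_apply, smul_eq_mul]
    linarith
  · intro t ht
    have h1 := sSup_image_ball_sub_sInf_image_ball_le ht.1 hx hx'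
      (hosc (s + t) y (by linarith [ht.1]) (by linarith [ht.2]) hy)
    have h2 := sInf_image_ball_sub_sSup_image_ball_le hv ht.1 hx hx'
      (G := oscBarrier c A r ε (s - t) (y - z) + θ)
      (add_nonneg (oscBarrier_nonneg hc (by linarith) (by linarith [ht.2]) (by linarith [ht.1])) hθ)
      (fun a ha => hosc (s - t) y (pos_of_mem_ball ha) (by linarith [ht.1]) hy a ha)
    refine (add_le_add h1 h2).trans (le_of_eq ?_)
    simp only [hF, oscBarrier]
    ring

/-- Asymptotic Lipschitz estimate for solutions of the dynamic programming principle. -/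
theorem sub_le_of_satisfiesDPPAt {r : ℝ} {z : E} (hε : 0 < ε) (hεr : ε < r)
    (hα : 0 < α) (hβ : 0 ≤ β) (hαβ : α + β = 1) (hM : 0 ≤ M)
    (hvm : Measurable v) (hv : ∀ x, |v x| ≤ M)
    (hdpp : ∀ x ∈ ball z (2 * r), SatisfiesDPPAt μ α β ε v x)
    {s : ℝ} (hs : 0 < s) (hs2 : s < 2 * r) {x x' : E} (hx : x ∈ ball z s) (hx' : x' ∈ ball z s) :
    v x - v x' ≤ (2 * M + 1) / r ^ 2 * (3 * β / α + 1) * (6 * r) * (s + ε) := by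
  have hr : 0 < r := hε.trans hεr
  set c := (2 * M + 1) / r ^ 2 with hc
  have hc0 : 0 < c := by positivity
  have hcr : c * r ^ 2 = 2 * M + 1 := by rw [hc]; field_simp
  obtain ⟨A, hA⟩ : ∃ A, A = 3 * β / α + 1 := ⟨_, rfl⟩
  have hA0 : 0 < A := by rw [hA]; positivity
  obtain ⟨δ, hδ⟩ : ∃ δ, δ = c * ε ^ 2 * α / 3 := ⟨_, rfl⟩
  have hδ0 : 0 < δ := by rw [hδ]; positivity
  have hiter : ∀ k : ℕ, ∀ s y, 0 < s → s < 2 * r → ‖y - z‖ < 2 * r → ∀ x ∈ ball y s,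
      ∀ x' ∈ ball y s, v x - v x' ≤ oscBarrier c A r ε s (y - z) + max (2 * M - k * δ) 0 := by
    intro k
    induction k with
    | zero =>
      intro s y hs hs2 _ x _ x' _
      have h1 := oscBarrier_nonneg (ε := ε) (Z := y - z) hc0.le hA0.le (s := s) (r := r)
        (by linarith) (by linarith)
      have h2 := abs_le.1 (hv x)
      have h3 := abs_le.1 (hv x')
      have h4 := le_max_left (2 * M - ((0 : ℕ) : ℝ) * δ) 0
      simp only [Nat.cast_zero, zero_mul] at h4 ⊢
      linarith
    | succ k ih =>
      intro s y hs hs2 hy x hx x' hx'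
      refine (sub_le_oscBarrier_add_of_sub_le hε hεr hα hβ hαβ hA hc0.le (by linarith) hvm hv hdpp
        (le_max_right _ _) ih hs hs2 hy hx hx').trans ?_
      refine add_le_add le_rfl (max_le ?_ (le_max_right _ _))
      rw [← hδ, sub_le_iff_le_add]
      refine max_le ?_ (by positivity)
      push_cast
      linarith [le_max_left (2 * M - (k + 1) * δ) 0]
  obtain ⟨k, hk⟩ := exists_nat_ge (2 * M / δ)
  rw [div_le_iff₀ hδ0] at hk
  have h := hiter k s z hs hs2 (by simpa using hr) x hx x' hx'
  rw [max_eq_right (by linarith), add_zero, sub_self] at h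
  refine h.trans ?_
  simp only [oscBarrier, norm_zero, ← hA]
  have : 0 ≤ c * A * (s + ε) ^ 2 := by positivity
  linarith

theorem real_ball_diff_ball_le (hε : 0 < ε) {x y : E} (hxy : dist x y < ε) :
    μ.real (ball x ε \ ball y ε)
      ≤ μ.real (ball (0 : E) ε) * (Module.finrank ℝ E * (dist x y / ε)) := by
  set d := dist x y
  have hd : 0 ≤ d := dist_nonneg
  have hsub : ball x (ε - d) ⊆ ball x ε := ball_subset_ball (by linarith)
  have hsub' : ball x ε \ ball y ε ⊆ ball x ε \ ball x (ε - d) :=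
    sdiff_subset_sdiff_right (ball_subset_ball' (by simp [d]))
  have hvol : ∀ t, 0 < t → μ.real (ball x t) = t ^ Module.finrank ℝ E * μ.real (ball (0 : E) 1) :=
    fun t ht => by
      rw [Measure.real, Measure.addHaar_ball_of_pos μ x ht, ENNReal.toReal_mul,
        ENNReal.toReal_ofReal (by positivity), Measure.real]
  have hfin : ∀ t, μ (ball x t) ≠ ⊤ := fun t => measure_ball_lt_top.ne
  have hbern := one_add_mul_le_pow (a := -(d / ε))
    (by have : d / ε ≤ 1 := (div_le_one hε).2 hxy.le
        linarith) (Module.finrank ℝ E)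
  have hsplit : ε - d = ε * (1 + -(d / ε)) := by field_simp; ring
  calc μ.real (ball x ε \ ball y ε) ≤ μ.real (ball x ε \ ball x (ε - d)) :=
        measureReal_mono hsub' (measure_ne_top_of_subset sdiff_subset (hfin ε))
    _ = μ.real (ball x ε) - μ.real (ball x (ε - d)) :=
        measureReal_sdiff hsub measurableSet_ball (hfin _)
    _ = μ.real (ball x ε) * (1 - (1 + -(d / ε)) ^ Module.finrank ℝ E) := by
        rw [hvol _ hε, hvol _ (by linarith), hsplit, mul_pow]; ring
    _ ≤ μ.real (ball x ε) * (Module.finrank ℝ E * (d / ε)) := by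
        gcongr; linarith
    _ = _ := by rw [Measure.real, Measure.addHaar_ball_center, Measure.real]

/-- Averages over nearby balls of a function oscillating by at most `D` around `q`. -/
theorem setAverage_ball_sub_setAverage_ball_le (hε : 0 < ε) (hvm : Measurable v)
    (hv : ∀ x, |v x| ≤ M) {x y : E} (hxy : dist x y < ε) {D q : ℝ}
    (hD : ∀ a ∈ ball y (2 * ε), |v a - q| ≤ D) :
    (⨍ z in ball x ε, v z ∂μ) - ⨍ z in ball y ε, v z ∂μ
      ≤ 2 * D * (Module.finrank ℝ E * (dist x y / ε)) := by
  have hm := real_ball_zero_pos (μ := μ) hε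
  have hxs : ball x ε ⊆ ball y (2 * ε) := ball_subset_ball' (by linarith)
  have hys : ball y ε ⊆ ball y (2 * ε) := ball_subset_ball (by linarith)
  have hD0 : 0 ≤ D := (abs_nonneg _).trans (hD y (mem_ball_self (by linarith)))
  set w : E → ℝ := fun a => v a - (q - D) with hw
  have hwm : Measurable w := hvm.sub_const _
  have hwi : ∀ a t, IntegrableOn w (ball a t) μ := fun a t =>
    (integrableOn_ball_of_abs_le hvm hv a t).sub (integrableOn_const measure_ball_lt_top.ne)
  have hvw : ∀ a : E, ∫ z in ball a ε, w z ∂μ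
      = (∫ z in ball a ε, v z ∂μ) - μ.real (ball 0 ε) * (q - D) := fun a => by
    have hk : Integrable (fun _ : E => q - D) (μ.restrict (ball a ε)) :=
      integrableOn_const measure_ball_lt_top.ne
    rw [hw, integral_sub (integrableOn_ball_of_abs_le hvm hv a ε) hk]
    simp [Measure.real, Measure.addHaar_ball_center]
  have hw0 : ∀ a ∈ ball y (2 * ε), 0 ≤ w a ∧ w a ≤ 2 * D := fun a ha => by
    have := abs_le.1 (hD a ha)
    constructor <;> simp only [hw] <;> linarith
  have hle : ∫ z in ball x ε, w z ∂μ ≤ (∫ z in ball y ε, w z ∂μ)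
      + 2 * D * μ.real (ball x ε \ ball y ε) := by
    rw [← integral_inter_add_sdiff measurableSet_ball (hwi x ε) (t := ball y ε)]
    refine add_le_add (setIntegral_mono_set (hwi y ε) ?_ inter_subset_right.eventuallyLE) ?_
    · filter_upwards [ae_restrict_mem measurableSet_ball] with a ha using (hw0 a (hys ha)).1
    · have hfin : μ (ball x ε \ ball y ε) ≠ ⊤ :=
        measure_ne_top_of_subset sdiff_subset measure_ball_lt_top.ne
      calc ∫ z in ball x ε \ ball y ε, w z ∂μ ≤ ∫ z in ball x ε \ ball y ε, 2 * D ∂μ :=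
            setIntegral_mono_on ((hwi x ε).mono_set sdiff_subset) (integrableOn_const hfin)
              (measurableSet_ball.diff measurableSet_ball) fun a ha => (hw0 a (hxs ha.1)).2
        _ = _ := by simp [mul_comm]
  have hvol := mul_le_mul_of_nonneg_left (real_ball_diff_ball_le (μ := μ) hε hxy)
    (by positivity : 0 ≤ 2 * D)
  rw [setAverage_ball_eq, setAverage_ball_eq, ← mul_sub, inv_mul_le_iff₀ hm]
  rw [hvw, hvw] at hle
  linarith

/-- The regularizing effect of the dynamic programming principle below the scale `ε`. -/
theorem SatisfiesDPPAt.sub_le_of_dist_lt (hε : 0 < ε) (hα : 0 ≤ α) (hβ : 0 ≤ β)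
    (hvm : Measurable v) (hv : ∀ x, |v x| ≤ M) {x y : E}
    (hx : SatisfiesDPPAt μ α β ε v x) (hy : SatisfiesDPPAt μ α β ε v y) (hxy : dist x y < ε)
    {D : ℝ} (hD : ∀ a ∈ ball y (2 * ε), |v a - v y| ≤ D) :
    v x - v y ≤ 2 * (α + β * Module.finrank ℝ E) * D / ε * dist x y := by
  set d := dist x y with hd
  have hd0 : 0 ≤ d := dist_nonneg
  have hbound : ∀ w : E, dist w y < ε → ∀ t ∈ Ioo 0 ε, ∀ a ∈ ball w t,
      v y - D ≤ v a ∧ v a ≤ v y + D := fun w hw t ht a ha => by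
    have := abs_le.1 (hD a (ball_subset_ball' (by linarith [ht.2]) ha))
    constructor <;> linarith
  have hne : ∀ (w : E) t, 0 < t → (v '' ball w t).Nonempty :=
    fun w t ht => (nonempty_ball.2 ht).image v
  have hball : ∀ {w w' : E} {t}, dist w w' = d → ball w t ⊆ ball w' (t + d) := fun h =>
    ball_subset_ball' (by rw [h])
  have hyy : dist y y < ε := by simpa using hε
  have hS : ∫ t in 0..ε, sSup (v '' ball x t)
      ≤ (∫ t in 0..ε, sSup (v '' ball y t)) + d * ((v y + D) - (v y - D)) := by
    refine integral_le_integral_add_of_le_shift hd0 hxy.le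
      (fun a b => intervalIntegrable_sSup_image_ball hv x)
      (fun a b => intervalIntegrable_sSup_image_ball hv y) (fun t ht => ?_) (fun t ht => ?_)
      (fun t ht => ?_)
    · refine csSup_le (hne x t ht.1) ?_
      rintro _ ⟨a, ha, rfl⟩
      exact (hbound x hxy t ht a ha).2
    · exact (hbound y hyy t ht y (mem_ball_self ht.1)).1.trans
        (le_csSup (bddAbove_image_of_abs_le hv _) (mem_image_of_mem v (mem_ball_self ht.1)))
    · exact csSup_le_csSup (bddAbove_image_of_abs_le hv _) (hne x t ht)
        (image_mono (hball hd.symm))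
  have hI : ∫ t in 0..ε, -sInf (v '' ball y t)
      ≤ (∫ t in 0..ε, -sInf (v '' ball x t)) + d * (-(v y - D) - -(v y + D)) := by
    refine integral_le_integral_add_of_le_shift hd0 hxy.le
      (fun a b ha hab => (intervalIntegrable_sInf_image_ball hv y ha hab).neg)
      (fun a b ha hab => (intervalIntegrable_sInf_image_ball hv x ha hab).neg) (fun t ht => ?_)
      (fun t ht => ?_) (fun t ht => ?_)
    · refine neg_le_neg (le_csInf (hne y t ht.1) ?_)
      rintro _ ⟨a, ha, rfl⟩
      exact (hbound y hyy t ht a ha).1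
    · exact neg_le_neg ((csInf_le (bddBelow_image_of_abs_le hv _)
        (mem_image_of_mem v (mem_ball_self ht.1))).trans
          (hbound x hxy t ht x (mem_ball_self ht.1)).2)
    · exact neg_le_neg (csInf_le_csInf (bddBelow_image_of_abs_le hv _) (hne y t ht)
        (image_mono (hball (by rw [dist_comm]))))
  rw [intervalIntegral.integral_neg, intervalIntegral.integral_neg] at hI
  have hA := setAverage_ball_sub_setAverage_ball_le (μ := μ) hε hvm hv hxy hD
  have hadd : ∀ w : E, ∫ t in (0 : ℝ)..ε, (sSup (v '' ball w t) + sInf (v '' ball w t))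
      = (∫ t in 0..ε, sSup (v '' ball w t)) + ∫ t in 0..ε, sInf (v '' ball w t) := fun w =>
    intervalIntegral.integral_add (intervalIntegrable_sSup_image_ball hv w le_rfl hε.le)
      (intervalIntegrable_sInf_image_ball hv w le_rfl hε.le)
  have h1 := mul_le_mul_of_nonneg_left (add_le_add hS hI) (by positivity : 0 ≤ α / (2 * ε))
  have h2 := mul_le_mul_of_nonneg_left hA hβ
  rw [hx, hy, hadd, hadd]
  have h3 : 2 * (α + β * Module.finrank ℝ E) * D / ε * d
      = α / (2 * ε) * (4 * D * d) + β * (2 * D * (Module.finrank ℝ E * (d / ε))) := by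
    field_simp
    ring
  rw [h3]
  linarith

/-- Lipschitz estimate for solutions of the dynamic programming principle. -/
theorem sub_le_mul_dist_of_satisfiesDPPAt {r : ℝ} {z₀ : E} (hε : 0 < ε) (hεr : ε < r)
    (hα : 0 < α) (hβ : 0 ≤ β) (hαβ : α + β = 1) (hM : 0 ≤ M)
    (hvm : Measurable v) (hv : ∀ x, |v x| ≤ M)
    (hdpp : ∀ x ∈ ball z₀ (3 * r), SatisfiesDPPAt μ α β ε v x)
    {x y : E} (hx : x ∈ ball z₀ r) (hy : y ∈ ball z₀ r) :
    v x - v y ≤ (6 * (1 + Module.finrank ℝ E) *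
      ((2 * M + 1) / r ^ 2 * (3 * β / α + 1) * (6 * r)) + 2 * M / r) * dist x y := by
  have hr : 0 < r := hε.trans hεr
  obtain ⟨K, hK⟩ : ∃ K, K = (2 * M + 1) / r ^ 2 * (3 * β / α + 1) * (6 * r) := ⟨_, rfl⟩
  have hK0 : 0 ≤ K := by rw [hK]; positivity
  obtain ⟨N, hN⟩ : ∃ N : ℝ, N = Module.finrank ℝ E := ⟨_, rfl⟩
  have hN0 : 0 ≤ N := by rw [hN]; positivity
  have hosc : ∀ s, 0 < s → s < 2 * r → ∀ a ∈ ball y s, ∀ a' ∈ ball y s,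
      v a - v a' ≤ K * (s + ε) := fun s hs hs2 a ha a' ha' => by
    rw [hK]
    refine sub_le_of_satisfiesDPPAt hε hεr hα hβ hαβ hM hvm hv (fun w hw => hdpp w ?_) hs hs2 ha ha'
    exact ball_subset_ball' (by linarith [mem_ball.1 hy]) hw
  rw [← hK, ← hN]
  have hd0 : 0 ≤ dist x y := dist_nonneg
  have hMr : 0 ≤ 2 * M / r := by positivity
  rcases lt_or_ge (dist x y) ε with hlt | hge
  · have hsub : ball z₀ r ⊆ ball z₀ (3 * r) := ball_subset_ball (by linarith)
    have h := SatisfiesDPPAt.sub_le_of_dist_lt hε hα.le hβ hvm hv (hdpp x (hsub hx))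
      (hdpp y (hsub hy)) hlt (D := K * (2 * ε + ε)) fun a ha => by
        have hyb : y ∈ ball y (2 * ε) := mem_ball_self (by linarith)
        have h1 := hosc (2 * ε) (by linarith) (by linarith) a ha y hyb
        have h2 := hosc (2 * ε) (by linarith) (by linarith) y hyb a ha
        exact abs_le.2 ⟨by linarith, h1⟩
    refine h.trans ?_
    gcongr ?_ * _
    have h1 : 2 * (α + β * Module.finrank ℝ E) * (K * (2 * ε + ε)) / ε
        = 6 * (α + β * N) * K := by rw [hN]; field_simp; ring
    have h2 : α + β * N ≤ 1 + N := by nlinarith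
    have h3 : 6 * (α + β * N) * K ≤ 6 * (1 + N) * K := by gcongr
    linarith
  · have hd : 0 < dist x y := hε.trans_le hge
    have hKN : 0 ≤ K * N * dist x y := by positivity
    have hKd : 0 ≤ K * dist x y := by positivity
    rcases lt_or_ge (dist x y) r with hlt | hge'
    · have h1 := hosc (2 * dist x y) (by linarith) (by linarith) x (mem_ball.2 (by linarith)) y
        (mem_ball_self (by linarith))
      have h2 : K * ε ≤ K * dist x y := by gcongr
      have h3 : 0 ≤ 2 * M / r * dist x y := by positivity
      linarith
    · have h1 := abs_le.1 (hv x)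
      have h2 := abs_le.1 (hv y)
      have h3 : 2 * M ≤ 2 * M / r * dist x y := by
        calc 2 * M = 2 * M / r * r := by field_simp
          _ ≤ _ := by gcongr
      linarith

end DPP

/-- **Existence and bound of the gradient (Theorem 3.2, second part).** For every `p > 2`,
integer `n ≥ 2`, `r > 0` and `M ≥ 0` there exists `C > 0` depending only on `p, n, r, M`
such that: whenever `ε ∈ (0,1)` with `ε < r` and `u` is a bounded Borel function on `Ω_ε`
with `sup_{Ω_ε}|u| ≤ M` satisfying the DPP at every point of `Ω`, then for every `z₀`
with `B_{5r}(z₀) ⊆ Ω`, `u` is differentiable at Lebesgue-almost every point of `B_r(z₀)`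
and its gradient satisfies `|Du(z)| ≤ C` for a.e. `z ∈ B_r(z₀)`. -/
theorem gradient_exists_and_bounded (n : ℕ) (hn : 2 ≤ n) (p r M : ℝ)
    (hp : 2 < p) (hr : 0 < r) (hM : 0 ≤ M) :
    ∃ C : ℝ, 0 < C ∧
      ∀ (Ω : Set (EuclideanSpace ℝ (Fin n))),
        IsOpen Ω → IsConnected Ω → Bornology.IsBounded Ω →
      ∀ ε : ℝ, ε ∈ Set.Ioo (0 : ℝ) 1 → ε < r →
      ∀ u : EuclideanSpace ℝ (Fin n) → ℝ,
        Measurable u →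
        (∀ x ∈ Ω ∪ {x | x ∉ Ω ∧ Metric.infDist x (frontier Ω) ≤ ε}, |u x| ≤ M) →
        (∀ x ∈ Ω, u x =
          ((p - 2) / (n + p)) / (2 * ε) *
              (∫ t in (0 : ℝ)..ε, (sSup (u '' Metric.ball x t) + sInf (u '' Metric.ball x t)))
            + ((n + 2) / (n + p)) * ⨍ z in Metric.ball x ε, u z) →
      ∀ z₀ : EuclideanSpace ℝ (Fin n), Metric.ball z₀ (5 * r) ⊆ Ω →
        ∀ᵐ z ∂(volume.restrict (Metric.ball z₀ r)),
          DifferentiableAt ℝ u z ∧ ‖fderiv ℝ u z‖ ≤ C := by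
  have hn0 : (0 : ℝ) ≤ n := n.cast_nonneg
  have hnp : 0 < (n : ℝ) + p := by linarith
  set α := (p - 2) / (n + p) with hα
  set β := (n + 2) / (n + p) with hβ
  have hα0 : 0 < α := div_pos (by linarith) hnp
  have hβ0 : 0 < β := div_pos (by linarith) hnp
  have hαβ : α + β = 1 := by rw [hα, hβ, ← add_div, div_eq_one_iff_eq hnp.ne']; ring
  set C : ℝ := 6 * (1 + Module.finrank ℝ (EuclideanSpace ℝ (Fin n))) *
    ((2 * M + 1) / r ^ 2 * (3 * β / α + 1) * (6 * r)) + 2 * M / r with hC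
  have hC0 : 0 < C := by positivity
  refine ⟨C, hC0, fun Ω _ _ _ ε hε hεr u hum huM hdpp z₀ hz₀ => ?_⟩
  have hε0 : 0 < ε := hε.1
  set v := (ball z₀ (5 * r)).indicator u with hv
  have hvu : ∀ x ∈ ball z₀ (5 * r), v x = u x := fun x hx => indicator_of_mem hx u
  have hvm : Measurable v := hum.indicator measurableSet_ball
  have hvM : ∀ x, |v x| ≤ M := fun x => by
    by_cases hx : x ∈ ball z₀ (5 * r)
    · rw [hvu x hx]; exact huM x (Or.inl (hz₀ hx))
    · rw [hv, indicator_of_notMem hx]; simpa using hM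
  have hvdpp : ∀ x ∈ ball z₀ (3 * r), SatisfiesDPPAt volume α β ε v x := fun x hx => by
    have hsub : ∀ t ≤ ε, ball x t ⊆ ball z₀ (5 * r) := fun t ht =>
      ball_subset_ball' (by linarith [mem_ball.1 hx])
    have hx5 : x ∈ ball z₀ (5 * r) := ball_subset_ball (by linarith) hx
    have himage : ∀ t ≤ ε, v '' ball x t = u '' ball x t := fun t ht =>
      image_congr fun a ha => hvu a (hsub t ht ha)
    have hint : ∫ t in (0 : ℝ)..ε, (sSup (v '' ball x t) + sInf (v '' ball x t))
        = ∫ t in (0 : ℝ)..ε, (sSup (u '' ball x t) + sInf (u '' ball x t)) := by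
      refine intervalIntegral.integral_congr fun t ht => ?_
      rw [uIcc_of_le hε0.le] at ht
      simp only [himage t ht.2]
    have havg : ⨍ z in ball x ε, v z = ⨍ z in ball x ε, u z := by
      rw [setAverage_eq, setAverage_eq,
        setIntegral_congr_fun measurableSet_ball fun a ha => hvu a (hsub ε le_rfl ha)]
    rw [SatisfiesDPPAt, hint, havg, hvu x hx5]
    exact hdpp x (hz₀ hx5)
  have hlip : LipschitzOnWith C.toNNReal u (ball z₀ r) := by
    refine LipschitzOnWith.of_le_add_mul _ fun x hx y hy => ?_
    have hsub : ball z₀ r ⊆ ball z₀ (5 * r) := ball_subset_ball (by linarith)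
    rw [Real.coe_toNNReal _ hC0.le, ← hvu x (hsub hx), ← hvu y (hsub hy)]
    linarith [sub_le_mul_dist_of_satisfiesDPPAt hε0 hεr hα0 hβ0.le hαβ hM hvm hvM hvdpp hx hy]
  filter_upwards [hlip.ae_differentiableWithinAt measurableSet_ball,
    ae_restrict_mem measurableSet_ball] with z hz hzr
  have hnhds : ball z₀ r ∈ nhds z := isOpen_ball.mem_nhds hzr
  refine ⟨hz.differentiableAt hnhds, ?_⟩
  simpa [Real.coe_toNNReal _ hC0.le] using norm_fderiv_le_of_lipschitzOn ℝ hnhds hlip
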